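/- There is a constant c > 0 such that for every integer d ≥ 1 the following holds. There exists a finite set S of polynomials of degree at most 2, of cardinality O(d), such that sup_{x∈[-1,1]} |f(x) − g(x)| ≤ 2σ_d for all f, g ∈ S, where σ_d = (1 − 1/(64d³))/2, and yet every polynomial q of degree at most d satisfies max_{f∈S} sup_{x∈[-1,1]} |q(x) − f(x)| ≥ σ_d + c/d³. Consequently, any proper degree-d ℓ∞ approximation from data consistent with noise level σ_d must incur approximation factor at least 1 + Ω(1/d³). -/

import Mathlib

/-!
Fix parabolas with vertices at equally spaced points of `[-1, 1]`, alternately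
`1 - A (x - t)²` and `A (x - t)²`. A polynomial within less than `1/2` of all of them is `> 1/2` at
the vertices of the former and `< 1/2` at those of the latter, so with `d + 2` vertices it crosses
the level `1/2` at `d + 1` points and has degree greater than `d`. On the other hand, two parabolas
of opposite orientation differ by `1 - A ((x - t)² + (x - t')²) ≤ 1 - A (t - t')² / 2`, which is
where the gap below `2 · 1/2` comes from.

The curvature `A` need not shrink with `d`: `A = 1/8` keeps `A (x - t)²` below `1/2` on `[-1, 1]`,
and with spacing `2 / (d + 1)` the gap is of order `1/d²` rather than `1/d³`.
-/

open Polynomial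

/-- The sup-norm of `f` over `[-1, 1]`. -/
noncomputable def supNorm (f : ℝ → ℝ) : ℝ := ⨆ x : Set.Icc (-1 : ℝ) 1, |f x|

theorem abs_le_supNorm {f : ℝ → ℝ} (hf : ContinuousOn f (Set.Icc (-1) 1)) {x : ℝ}
    (hx : x ∈ Set.Icc (-1 : ℝ) 1) : |f x| ≤ supNorm f := by
  have hbdd : BddAbove (Set.range fun y : Set.Icc (-1 : ℝ) 1 => |f y|) :=
    (isCompact_range hf.domRestrict.abs).bddAbove
  exact le_ciSup hbdd ⟨x, hx⟩

theorem supNorm_le {f : ℝ → ℝ} {M : ℝ} (hf : ∀ x ∈ Set.Icc (-1 : ℝ) 1, |f x| ≤ M) :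
    supNorm f ≤ M :=
  have : Nonempty (Set.Icc (-1 : ℝ) 1) := ⟨0, by norm_num⟩
  ciSup_le fun x => hf x x.2

section SignChanges

variable {n : ℕ} {x : Fin (n + 1) → ℝ}

theorem exists_mem_Ioo_isRoot_of_eval_mul_eval_neg {p : ℝ[X]} {a b : ℝ} (hab : a ≤ b)
    (h : p.eval a * p.eval b < 0) : ∃ y ∈ Set.Ioo a b, p.IsRoot y := by
  have hcont : ContinuousOn (fun y => p.eval y) (Set.Icc a b) := p.continuousOn
  rcases mul_neg_iff.1 h with ⟨ha, hb⟩ | ⟨ha, hb⟩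
  · exact intermediate_value_Ioo' hab hcont ⟨hb, ha⟩
  · exact intermediate_value_Ioo hab hcont ⟨ha, hb⟩

theorem le_natDegree_of_eval_mul_eval_neg {p : ℝ[X]} (hx : StrictMono x)
    (h : ∀ i : Fin n, p.eval (x i.castSucc) * p.eval (x i.succ) < 0) : n ≤ p.natDegree := by
  obtain rfl | hp := eq_or_ne p 0
  · rcases n with - | n
    · simp
    · simpa using h 0
  choose y hy hroot using fun i =>
    exists_mem_Ioo_isRoot_of_eval_mul_eval_neg (hx i.castSucc_lt_succ).le (h i)
  have hy_mono : StrictMono y := fun i j hij =>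
    calc y i < x i.succ := (hy i).2
      _ ≤ x j.castSucc := hx.monotone (Fin.succ_le_castSucc_iff.2 hij)
      _ < y j := (hy j).1
  calc n = (Finset.univ.image y).card := by
        rw [Finset.card_image_of_injective _ hy_mono.injective, Finset.card_fin]
    _ ≤ p.roots.toFinset.card := Finset.card_le_card fun z hz => by
        obtain ⟨i, -, rfl⟩ := Finset.mem_image.1 hz
        simpa [hp] using hroot i
    _ ≤ p.natDegree := p.roots.toFinset_card_le.trans p.card_roots'

-- The easy half of de la Vallée Poussin's theorem on best uniform approximation.
theorem exists_le_abs_eval_sub_of_alternating {q : ℝ[X]} (hq : q.natDegree < n) (hx : StrictMono x)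
    (a r : ℝ) : ∃ i, r ≤ |q.eval (x i) - (a + (-1) ^ (i : ℕ) * r)| := by
  by_contra! hclose
  have hsign (i : Fin (n + 1)) : 0 < (-1) ^ (i : ℕ) * (q - C a).eval (x i) := by
    have := abs_lt.1 (hclose i)
    rcases neg_one_pow_eq_or ℝ (i : ℕ) with hi | hi <;>
      simp only [hi, eval_sub, eval_C] at this ⊢ <;> linarith
  have hn : n ≤ (q - C a).natDegree := le_natDegree_of_eval_mul_eval_neg hx fun i => by
    have hmul := mul_pos (hsign i.castSucc) (hsign i.succ)
    rcases neg_one_pow_eq_or ℝ (i : ℕ) with hi | hi <;>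
      simp only [Fin.val_castSucc, Fin.val_succ, pow_succ, hi] at hmul <;> linarith
  rw [natDegree_sub_C] at hn
  exact hn.not_gt hq

end SignChanges

/-- For `s = 1` the parabola `1 - A (x - t)²`, and for `s = -1` the parabola `A (x - t)²`: the two
orientations, with vertex at `t`, are mirror images in the level `1/2`. -/
noncomputable def signedParabola (A s t : ℝ) : ℝ[X] :=
  C (1 / 2) + C s * (C (1 / 2) - C A * (X - C t) ^ 2)

namespace signedParabola

variable {A s t t' x : ℝ}

theorem eval_eq (A s t x : ℝ) :
    (signedParabola A s t).eval x = 1 / 2 + s * (1 / 2 - A * (x - t) ^ 2) := by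
  simp [signedParabola]

theorem eval_vertex (A s t : ℝ) : (signedParabola A s t).eval t = 1 / 2 + s * (1 / 2) := by
  simp [eval_eq]

theorem natDegree_le_two (A s t : ℝ) : (signedParabola A s t).natDegree ≤ 2 := by
  unfold signedParabola
  compute_degree

theorem abs_eval_sub_eval_le (hA : 0 ≤ A) (hs : |s| ≤ 1) (ht : A * (x - t) ^ 2 ≤ 1 / 2)
    (ht' : A * (x - t') ^ 2 ≤ 1 / 2) :
    |(signedParabola A s t).eval x - (signedParabola A s t').eval x| ≤ 1 / 2 := by
  calc |(signedParabola A s t).eval x - (signedParabola A s t').eval x|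
      = |s * (A * (x - t') ^ 2 - A * (x - t) ^ 2)| := by simp only [eval_eq]; ring_nf
    _ ≤ |A * (x - t') ^ 2 - A * (x - t) ^ 2| := by
        rw [abs_mul]
        exact mul_le_of_le_one_left (abs_nonneg _) hs
    _ ≤ 1 / 2 := abs_sub_le_of_nonneg_of_le (by positivity) ht' (by positivity) ht

theorem abs_eval_sub_eval_neg_le (hA : 0 ≤ A) (hs : |s| ≤ 1) (ht : A * (x - t) ^ 2 ≤ 1 / 2)
    (ht' : A * (x - t') ^ 2 ≤ 1 / 2) :
    |(signedParabola A s t).eval x - (signedParabola A (-s) t').eval x| ≤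
      1 - A * ((t - t') ^ 2 / 2) := by
  have hparallelogram : (t - t') ^ 2 / 2 ≤ (x - t) ^ 2 + (x - t') ^ 2 := by
    linarith [sq_nonneg ((x - t) + (x - t'))]
  calc |(signedParabola A s t).eval x - (signedParabola A (-s) t').eval x|
      = |s * (1 - A * ((x - t) ^ 2 + (x - t') ^ 2))| := by simp only [eval_eq]; ring_nf
    _ ≤ 1 - A * ((x - t) ^ 2 + (x - t') ^ 2) := by
        rw [abs_mul, abs_of_nonneg (a := 1 - _) (by linarith)]
        exact mul_le_of_le_one_left (by linarith) hs
    _ ≤ 1 - A * ((t - t') ^ 2 / 2) := by gcongr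

end signedParabola

/-- The `k`-th of `d + 2` equally spaced points of `[-1, 1]`, counted from `0`. -/
noncomputable def equispacedNode (d : ℕ) (k : Fin (d + 2)) : ℝ := -1 + 2 / (d + 1) * (k : ℕ)

namespace equispacedNode

variable {d : ℕ} {j k : Fin (d + 2)}

theorem strictMono (d : ℕ) : StrictMono (equispacedNode d) := fun j k hjk => by
  unfold equispacedNode
  gcongr
  exact hjk

theorem mem_Icc (k : Fin (d + 2)) : equispacedNode d k ∈ Set.Icc (-1 : ℝ) 1 := by
  have hk : ((k : ℕ) : ℝ) ≤ d + 1 := by exact_mod_cast k.is_le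
  have hspread : 2 / ((d : ℝ) + 1) * (k : ℕ) ≤ 2 := by
    rw [div_mul_eq_mul_div, div_le_iff₀ (by positivity)]
    gcongr
  have hnonneg : 0 ≤ 2 / ((d : ℝ) + 1) * (k : ℕ) := by positivity
  constructor <;> unfold equispacedNode <;> linarith

theorem sq_spacing_le_sq_sub (hjk : j ≠ k) :
    (2 / ((d : ℝ) + 1)) ^ 2 ≤ (equispacedNode d j - equispacedNode d k) ^ 2 := by
  have hone : (1 : ℝ) ≤ (((j : ℕ) : ℝ) - (k : ℕ)) ^ 2 := by
    have hne : ((j : ℕ) : ℤ) - (k : ℕ) ≠ 0 := by omega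
    exact_mod_cast Int.add_one_le_of_lt (sq_pos_of_ne_zero hne)
  calc (2 / ((d : ℝ) + 1)) ^ 2 ≤ (2 / ((d : ℝ) + 1)) ^ 2 * (((j : ℕ) : ℝ) - (k : ℕ)) ^ 2 :=
        le_mul_of_one_le_right (by positivity) hone
    _ = (equispacedNode d j - equispacedNode d k) ^ 2 := by unfold equispacedNode; ring

end equispacedNode

/-- The hard instance: `d + 2` parabolas of alternating orientation with vertices at the equally
spaced points of `[-1, 1]`. -/
noncomputable def alternatingParabola (d : ℕ) (k : Fin (d + 2)) : ℝ[X] :=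
  signedParabola (1 / 8) ((-1) ^ (k : ℕ)) (equispacedNode d k)

namespace alternatingParabola

variable {d : ℕ}

theorem natDegree_le_two (k : Fin (d + 2)) : (alternatingParabola d k).natDegree ≤ 2 :=
  signedParabola.natDegree_le_two _ _ _

theorem supNorm_sub_le (j k : Fin (d + 2)) :
    supNorm (fun x => (alternatingParabola d j).eval x - (alternatingParabola d k).eval x) ≤
      1 - 1 / (4 * ((d : ℝ) + 1) ^ 2) := by
  refine supNorm_le fun x hx => ?_
  have hbound (i : Fin (d + 2)) : 1 / 8 * (x - equispacedNode d i) ^ 2 ≤ 1 / 2 := by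
    have hi := equispacedNode.mem_Icc i
    have : (x - equispacedNode d i) ^ 2 ≤ 2 ^ 2 :=
      sq_le_sq' (by linarith [hx.1, hi.2]) (by linarith [hx.2, hi.1])
    linarith
  have hA : (0 : ℝ) ≤ 1 / 8 := by norm_num
  have hs (i : ℕ) : |(-1 : ℝ) ^ i| = 1 := abs_neg_one_pow i
  unfold alternatingParabola
  rcases abs_eq_abs.1 ((hs k).trans (hs j).symm) with hsame | hopp
  · rw [hsame]
    refine (signedParabola.abs_eval_sub_eval_le hA (hs j).le (hbound j) (hbound k)).trans ?_
    have : 1 / (4 * ((d : ℝ) + 1) ^ 2) ≤ 1 / (4 * 1 ^ 2) := by gcongr; simp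
    linarith
  · have hjk : j ≠ k := by
      rintro rfl
      exact self_ne_neg.2 (pow_ne_zero _ (by norm_num)) hopp
    rw [hopp]
    calc _ ≤ 1 - 1 / 8 * ((equispacedNode d j - equispacedNode d k) ^ 2 / 2) :=
          signedParabola.abs_eval_sub_eval_neg_le hA (hs j).le (hbound j) (hbound k)
      _ ≤ 1 - 1 / 8 * ((2 / ((d : ℝ) + 1)) ^ 2 / 2) := by
          linarith [equispacedNode.sq_spacing_le_sq_sub hjk]
      _ = 1 - 1 / (4 * ((d : ℝ) + 1) ^ 2) := by field_simp; ring

theorem exists_half_le_supNorm_sub {q : ℝ[X]} (hq : q.natDegree ≤ d) :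
    ∃ k, 1 / 2 ≤ supNorm (fun x => q.eval x - (alternatingParabola d k).eval x) := by
  obtain ⟨k, hk⟩ := exists_le_abs_eval_sub_of_alternating (Nat.lt_succ_of_le hq)
    (equispacedNode.strictMono d) (1 / 2) (1 / 2)
  rw [← signedParabola.eval_vertex (1 / 8)] at hk
  exact ⟨k, hk.trans <| abs_le_supNorm (q.continuousOn.sub (Polynomial.continuousOn _))
    (equispacedNode.mem_Icc k)⟩

end alternatingParabola

theorem degree_d_approx_lower_bound_general (d : ℕ) :
    ∃ S : Finset ℝ[X],
      S.card ≤ d + 2 ∧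
      (∀ f ∈ S, f.natDegree ≤ 2) ∧
      (∀ f ∈ S, ∀ g ∈ S,
        supNorm (fun x => f.eval x - g.eval x) ≤ 1 - 1 / (4 * ((d : ℝ) + 1) ^ 2)) ∧
      ∀ q : ℝ[X], q.natDegree ≤ d →
        ∃ f ∈ S, 1 / 2 ≤ supNorm (fun x => q.eval x - f.eval x) := by
  classical
  refine ⟨Finset.univ.image (alternatingParabola d), ?_, ?_, ?_, fun q hq => ?_⟩
  · exact Finset.card_image_le.trans (Finset.card_fin _).le
  · simpa using alternatingParabola.natDegree_le_two
  · simpa using alternatingParabola.supNorm_sub_le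
  · simpa using alternatingParabola.exists_half_le_supNorm_sub hq

theorem one_div_mul_cube_le_one_div_mul_add_one_sq {d : ℝ} (hd : 1 ≤ d) :
    1 / (64 * d ^ 3) ≤ 1 / (4 * (d + 1) ^ 2) := by
  have hsq : (d + 1) ^ 2 ≤ (2 * d) ^ 2 := by gcongr; linarith
  have hcube : d ^ 2 ≤ d ^ 3 := pow_le_pow_right₀ hd (by norm_num)
  gcongr 1 / ?_
  nlinarith

/-- There are `O(d)` quadratics, pairwise within `ℓ∞` distance `2σ_d` of each other on
`[-1,1]` for `σ_d = (1 − 1/(64d³))/2`, such that every degree-`d` polynomial is at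
`ℓ∞` distance at least `σ_d + Ω(1/d³)` from one of them. -/
theorem degree_d_approx_lower_bound :
    ∃ c C : ℝ, 0 < c ∧ 0 < C ∧
      ∀ d : ℕ, 1 ≤ d →
        ∃ S : Finset (Polynomial ℝ),
          (S.card : ℝ) ≤ C * d ∧
          (∀ f ∈ S, f.natDegree ≤ 2) ∧
          (∀ f ∈ S, ∀ g ∈ S,
            supNorm (fun x => f.eval x - g.eval x) ≤
              2 * ((1 - 1 / (64 * (d : ℝ) ^ 3)) / 2)) ∧
          ∀ q : Polynomial ℝ, q.natDegree ≤ d →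
            ∃ f ∈ S,
              (1 - 1 / (64 * (d : ℝ) ^ 3)) / 2 + c / (d : ℝ) ^ 3 ≤
                supNorm (fun x => q.eval x - f.eval x) := by
  refine ⟨1 / 128, 3, by norm_num, by norm_num, fun d hd => ?_⟩
  obtain ⟨S, hcard, hdeg, hdist, happrox⟩ := degree_d_approx_lower_bound_general d
  have hgap := one_div_mul_cube_le_one_div_mul_add_one_sq (d := d) (by exact_mod_cast hd)
  have hcard' : S.card ≤ 3 * d := by omega
  have hlevel : (1 - 1 / (64 * (d : ℝ) ^ 3)) / 2 + 1 / 128 / (d : ℝ) ^ 3 = 1 / 2 := by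
    field_simp
    ring
  refine ⟨S, by exact_mod_cast hcard', hdeg, fun f hf g hg => ?_, fun q hq => ?_⟩
  · linarith [hdist f hf g hg]
  · rw [hlevel]
    exact happrox q hq
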